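/- Under the stability condition ρ(1 + β₁γ_{1,1}) < 1, the probability that an arriving inbound call enters the orbit satisfies P_w = lim_{z→1⁻} (P̃₁(z) + P̃₂(z) + P̃₃(z) + P̃₄(z)) = [ρ(1 + β₁γ_{1,1}) + σ(1 + β₂γ_{2,1})] / (1 + σ(1 + β₂γ_{2,1})), where ρ = λμ_{1,1} and σ = αμ_{2,1}. -/

import Mathlib

open MeasureTheory

/-- Laplace transform of a (Borel) measure on `ℝ`. -/
noncomputable def lapl (μ : Measure ℝ) (θ : ℝ) : ℝ :=
  ∫ x, Real.exp (-θ * x) ∂μ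

/-!
With `w = λ - λz`, the definition of `hᵢ` gives `1 + βᵢ (1 - R̃ᵢ(w)) / w = hᵢ(z) / w`: adding the
repair phase to the service phase of type `i` cancels the factor `1 / hᵢ`, and the sum of the four
generating functions collapses to `(ν / λ) g(z) P₀(z)`, where `g = P₀' / P₀`. As `z → 1⁻`, the left
derivative of `δᵢ` at `1` is `λ` times a mean completion time, so `g` has a finite limit by
l'Hôpital's rule; hence `∫_z^1 g → 0` and `P₀(z)` tends to its constant factor.
-/

open Filter Set Topology

section LeftLimits

lemma tendsto_div_of_hasDerivWithinAt {𝕜 : Type*} [NontriviallyNormedField 𝕜] {f g : 𝕜 → 𝕜}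
    {f' g' x : 𝕜} {s : Set 𝕜} (hf : HasDerivWithinAt f f' s x) (hg : HasDerivWithinAt g g' s x)
    (hfx : f x = 0) (hgx : g x = 0) (hg' : g' ≠ 0) :
    Tendsto (fun y => f y / g y) (𝓝[s \ {x}] x) (𝓝 (f' / g')) := by
  rw [hasDerivWithinAt_iff_tendsto_slope] at hf hg
  refine (hf.div hg hg').congr' ?_
  filter_upwards [self_mem_nhdsWithin] with y hy
  simp only [Pi.div_apply, slope_def_field, hfx, hgx, sub_zero]
  exact div_div_div_cancel_right₀ (sub_ne_zero.2 hy.2) _ _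

lemma eventually_ne_self_of_hasDerivWithinAt {𝕜 : Type*} [NontriviallyNormedField 𝕜] {f : 𝕜 → 𝕜}
    {f' x : 𝕜} {s : Set 𝕜} (hf : HasDerivWithinAt f f' s x) (hf' : f' ≠ 1) :
    ∀ᶠ y in 𝓝[s \ {x}] x, f y ≠ y :=
  ((hf.fun_sub (hasDerivAt_id' x).hasDerivWithinAt).eventually_ne (c := 0) (sub_ne_zero.2 hf')).mono
    fun _ => sub_ne_zero.1

lemma tendsto_intervalIntegral_nhdsLT_zero {E : Type*} [NormedAddCommGroup E] [NormedSpace ℝ E]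
    {f : ℝ → E} {b : ℝ} (hf : f =O[𝓝[<] b] fun _ => (1 : ℝ)) :
    Tendsto (fun a => ∫ x in a..b, f x) (𝓝[<] b) (𝓝 0) := by
  obtain ⟨C, hC⟩ := hf.bound
  obtain ⟨l, hl, hbound⟩ := (mem_nhdsLT_iff_exists_Ioo_subset).1 hC
  have hlim : Tendsto (fun a => C * |b - a|) (𝓝[<] b) (𝓝 0) := by
    have hcont : Continuous fun a => C * |b - a| := by fun_prop
    simpa using (hcont.tendsto b).mono_left nhdsWithin_le_nhds
  refine squeeze_zero_norm' ?_ hlim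
  filter_upwards [Ioo_mem_nhdsLT hl] with a ha
  refine intervalIntegral.norm_integral_le_of_norm_le_const_ae ?_
  filter_upwards [Measure.ae_ne volume b] with x hxb hx
  rw [uIoc_of_le ha.2.le] at hx
  simpa using hbound ⟨ha.1.trans hx.1, hx.2.lt_of_ne hxb⟩

lemma tendsto_exp_neg_intervalIntegral_nhdsLT_one {f : ℝ → ℝ} {b : ℝ}
    (hf : f =O[𝓝[<] b] fun _ => (1 : ℝ)) :
    Tendsto (fun a => Real.exp (-∫ x in a..b, f x)) (𝓝[<] b) (𝓝 1) := by
  simpa using (tendsto_intervalIntegral_nhdsLT_zero hf).neg.rexp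

end LeftLimits

section LaplaceTransform

lemma abs_slope_exp_neg_mul_le {θ x : ℝ} (hθ : 0 < θ) (hx : 0 ≤ x) :
    |slope (fun t => Real.exp (-t * x)) 0 θ| ≤ x := by
  have hle_one : Real.exp (-θ * x) ≤ 1 := Real.exp_le_one_iff.2 (by nlinarith)
  have hge : 1 - θ * x ≤ Real.exp (-θ * x) := by
    simpa only [neg_mul] using Real.one_sub_le_exp_neg (θ * x)
  rw [slope_def_field, sub_zero, abs_div, abs_of_pos hθ, div_le_iff₀ hθ, abs_le]
  simp only [neg_zero, zero_mul, Real.exp_zero]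
  constructor <;> nlinarith

variable {μ : Measure ℝ}

lemma ae_nonneg_iff_measure_Iio_eq_zero : (∀ᵐ x ∂μ, 0 ≤ x) ↔ μ (Iio 0) = 0 := by
  simp only [ae_iff, not_le, Iio_def]

lemma lapl_zero (μ : Measure ℝ) : lapl μ 0 = μ.real univ := by
  simp [lapl]

variable [IsFiniteMeasure μ] {θ : ℝ}

lemma integrable_exp_neg_mul (hμ : ∀ᵐ x ∂μ, 0 ≤ x) (hθ : 0 ≤ θ) :
    Integrable (fun x => Real.exp (-θ * x)) μ :=
  Integrable.of_bound (by fun_prop) 1 <| hμ.mono fun x hx => by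
    simpa using mul_nonneg hθ hx

lemma lapl_le_measureReal_univ (hμ : ∀ᵐ x ∂μ, 0 ≤ x) (hθ : 0 ≤ θ) : lapl μ θ ≤ μ.real univ := by
  rw [← lapl_zero]
  refine integral_mono_ae (integrable_exp_neg_mul hμ hθ) (integrable_exp_neg_mul hμ le_rfl) ?_
  filter_upwards [hμ] with x hx
  gcongr

lemma hasDerivWithinAt_lapl_zero (hμ : ∀ᵐ x ∂μ, 0 ≤ x) (hint : Integrable (fun x => x) μ) :
    HasDerivWithinAt (lapl μ) (-∫ x, x ∂μ) (Ioi 0) 0 := by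
  rw [hasDerivWithinAt_iff_tendsto_slope' self_notMem_Ioi, ← integral_neg]
  have hslope : ∀ᶠ θ in 𝓝[>] 0,
      ∫ x, slope (fun t => Real.exp (-t * x)) 0 θ ∂μ = slope (lapl μ) 0 θ := by
    filter_upwards [self_mem_nhdsWithin] with θ hθ
    simp only [slope_def_field]
    rw [integral_div, integral_sub (integrable_exp_neg_mul hμ (le_of_lt hθ))
      (integrable_exp_neg_mul hμ le_rfl)]
    rfl
  refine Tendsto.congr' hslope (tendsto_integral_filter_of_dominated_convergence (fun x => x)
    ?_ ?_ hint ?_)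
  · filter_upwards with θ
    simp only [slope_def_field]
    exact Measurable.aestronglyMeasurable (by fun_prop)
  · filter_upwards [self_mem_nhdsWithin] with θ hθ
    filter_upwards [hμ] with x hx using abs_slope_exp_neg_mul_le hθ hx
  · filter_upwards with x
    have hderiv : HasDerivAt (fun t : ℝ => Real.exp (-t * x)) (-x) 0 := by
      simpa using ((hasDerivAt_id (0 : ℝ)).neg.mul_const x).exp
    exact (hasDerivWithinAt_iff_tendsto_slope' self_notMem_Ioi).1 hderiv.hasDerivWithinAt

end LaplaceTransform

section CompletionTime

/-- The function `h` of the paper. A *completion time* is a service time together with the repairs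
of the failures (of rate `beta`) interrupting it; given a service time `x`, the inbound arrivals
during the completion time have generating function `exp (-h z * x)`. -/
noncomputable def completionExponent (lam beta : ℝ) (R : Measure ℝ) (z : ℝ) : ℝ :=
  lam + beta - lam * z - beta * lapl R (lam - lam * z)

/-- The function `δ` of the paper: the probability generating function of the number of inbound
arrivals during a completion time with service law `S` and repair law `R`. -/
noncomputable def completionPGF (lam beta : ℝ) (S R : Measure ℝ) (z : ℝ) : ℝ :=
  lapl S (completionExponent lam beta R z)

/-- The mean completion time `μ (1 + β γ)`, for a service law `S` of mean `μ` and a repair law `R`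
of mean `γ`. -/
noncomputable def meanCompletionTime (beta : ℝ) (S R : Measure ℝ) : ℝ :=
  (∫ x, x ∂S) * (1 + beta * ∫ x, x ∂ R)

variable {lam beta : ℝ} {S R : Measure ℝ}

lemma meanCompletionTime_nonneg (hbeta : 0 ≤ beta) (hS : ∀ᵐ x ∂S, 0 ≤ x) (hR : ∀ᵐ x ∂ R, 0 ≤ x) :
    0 ≤ meanCompletionTime beta S R := by
  have hmeanS := integral_nonneg_of_ae hS
  have hmeanR := integral_nonneg_of_ae hR
  unfold meanCompletionTime
  positivity

lemma hasDerivWithinAt_completionExponent [IsFiniteMeasure R] (hlam : 0 < lam)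
    (hR : ∀ᵐ x ∂ R, 0 ≤ x) (hint : Integrable (fun x => x) R) :
    HasDerivWithinAt (completionExponent lam beta R) (-(lam * (1 + beta * ∫ x, x ∂ R)))
      (Iio 1) 1 := by
  have hθ : HasDerivWithinAt (fun z => lam - lam * z) (-lam) (Iio 1) 1 := by
    simpa using (((hasDerivAt_id (1 : ℝ)).const_mul lam).const_sub lam).hasDerivWithinAt
  have hmaps : MapsTo (fun z => lam - lam * z) (Iio 1) (Ioi 0) := fun z hz =>
    sub_pos.2 (mul_lt_of_lt_one_right hlam hz)
  have hlapl : HasDerivWithinAt (lapl R) (-∫ x, x ∂ R) (Ioi 0) (lam - lam * 1) := by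
    simpa using hasDerivWithinAt_lapl_zero hR hint
  have hexp : completionExponent lam beta R =
      fun z => lam - lam * z + beta - beta * lapl R (lam - lam * z) := by
    funext z
    rw [completionExponent]
    ring
  rw [hexp]
  refine ((hθ.add_const beta).fun_sub
    ((hlapl.comp 1 hθ hmaps).const_mul beta)).congr_deriv ?_
  ring

variable [IsProbabilityMeasure R]

lemma completionExponent_one : completionExponent lam beta R 1 = 0 := by
  simp [completionExponent, lapl_zero]

lemma completionExponent_pos (hlam : 0 < lam) (hbeta : 0 ≤ beta) (hR : ∀ᵐ x ∂ R, 0 ≤ x) {z : ℝ}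
    (hz : z < 1) : 0 < completionExponent lam beta R z := by
  have hθ : 0 < lam - lam * z := by nlinarith
  have hlapl : lapl R (lam - lam * z) ≤ 1 := by
    simpa using lapl_le_measureReal_univ hR hθ.le
  unfold completionExponent
  nlinarith

variable [IsProbabilityMeasure S]

lemma completionPGF_one : completionPGF lam beta S R 1 = 1 := by
  simp [completionPGF, completionExponent_one, lapl_zero]

lemma hasDerivWithinAt_completionPGF (hlam : 0 < lam) (hbeta : 0 ≤ beta)
    (hS : ∀ᵐ x ∂S, 0 ≤ x) (hR : ∀ᵐ x ∂ R, 0 ≤ x)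
    (hintS : Integrable (fun x => x) S) (hintR : Integrable (fun x => x) R) :
    HasDerivWithinAt (completionPGF lam beta S R) (lam * meanCompletionTime beta S R)
      (Iio 1) 1 := by
  have hmaps : MapsTo (completionExponent lam beta R) (Iio 1) (Ioi 0) := fun z hz =>
    completionExponent_pos hlam hbeta hR hz
  have hlapl : HasDerivWithinAt (lapl S) (-∫ x, x ∂S) (Ioi 0)
      (completionExponent lam beta R 1) := by
    simpa only [completionExponent_one] using hasDerivWithinAt_lapl_zero hS hintS
  refine (hlapl.comp 1 (hasDerivWithinAt_completionExponent hlam hR hintR) hmaps).congr_deriv ?_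
  rw [meanCompletionTime]
  ring

end CompletionTime

section BusyProbability

/-- The integrand `g` of `φ`: the logarithmic derivative of the generating function `P₀` of the
idle states, in terms of the generating functions `δ1`, `δ2` of the arrivals during a completion
time. -/
noncomputable def idleLogDeriv (lam alpha nu : ℝ) (δ1 δ2 : ℝ → ℝ) (u : ℝ) : ℝ :=
  (lam * (1 - δ1 u) + alpha * (1 - δ2 u)) / (nu * (δ1 u - u))

lemma tendsto_idleLogDeriv (lam alpha : ℝ) {nu d1 d2 : ℝ} {δ1 δ2 : ℝ → ℝ} (hnu : nu ≠ 0)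
    (hδ1 : HasDerivWithinAt δ1 d1 (Iio 1) 1) (hδ2 : HasDerivWithinAt δ2 d2 (Iio 1) 1)
    (hδ1_one : δ1 1 = 1) (hδ2_one : δ2 1 = 1) (hd1 : d1 ≠ 1) :
    Tendsto (idleLogDeriv lam alpha nu δ1 δ2) (𝓝[<] 1)
      (𝓝 ((lam * d1 + alpha * d2) / (nu * (1 - d1)))) := by
  have hnum := ((hδ1.const_sub 1).const_mul lam).fun_add ((hδ2.const_sub 1).const_mul alpha)
  have hden := (hδ1.fun_sub (hasDerivAt_id' 1).hasDerivWithinAt).const_mul nu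
  have hlim := tendsto_div_of_hasDerivWithinAt hnum hden (by simp [hδ1_one, hδ2_one])
    (by simp [hδ1_one]) (mul_ne_zero hnu (sub_ne_zero.2 hd1))
  rw [sdiff_singleton_eq_self self_notMem_Iio] at hlim
  have hlimit : (lam * d1 + alpha * d2) / (nu * (1 - d1)) =
      (lam * -d1 + alpha * -d2) / (nu * (d1 - 1)) := by
    rw [← neg_div_neg_eq]
    congr 1 <;> ring
  rw [hlimit]
  exact hlim

lemma tendsto_idleLogDeriv_mul_exp (lam alpha c : ℝ) {nu d1 d2 : ℝ} {δ1 δ2 : ℝ → ℝ}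
    (hnu : nu ≠ 0) (hδ1 : HasDerivWithinAt δ1 d1 (Iio 1) 1)
    (hδ2 : HasDerivWithinAt δ2 d2 (Iio 1) 1) (hδ1_one : δ1 1 = 1) (hδ2_one : δ2 1 = 1)
    (hd1 : d1 ≠ 1) :
    Tendsto (fun z => idleLogDeriv lam alpha nu δ1 δ2 z *
        (c * Real.exp (-∫ u in z..1, idleLogDeriv lam alpha nu δ1 δ2 u)))
      (𝓝[<] 1) (𝓝 ((lam * d1 + alpha * d2) / (nu * (1 - d1)) * c)) := by
  have hg := tendsto_idleLogDeriv lam alpha hnu hδ1 hδ2 hδ1_one hδ2_one hd1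
  have hexp := tendsto_exp_neg_intervalIntegral_nhdsLT_one (hg.isBigO_one ℝ)
  simpa only [mul_one] using hg.mul (hexp.const_mul c)

lemma busy_sum_eq {K : Type*} [Field K] {lam alpha nu beta1 beta2 r1 r2 h1 h2 d1 d2 p z : K}
    (hlam : lam ≠ 0) (hnu : nu ≠ 0) (hz : z ≠ 1) (hd1 : d1 ≠ z) (hh1_ne : h1 ≠ 0) (hh2_ne : h2 ≠ 0)
    (hh1 : h1 = lam + beta1 - lam * z - beta1 * r1)
    (hh2 : h2 = lam + beta2 - lam * z - beta2 * r2) :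
    (lam * (1 - z) + alpha * (1 - d2)) * (1 - d1) / ((d1 - z) * h1) * p
        + alpha * (1 - d2) / h2 * p
        + beta1 * (1 - r1) / (lam - lam * z)
          * ((lam * (1 - z) + alpha * (1 - d2)) * (1 - d1) / ((d1 - z) * h1) * p)
        + beta2 * (1 - r2) / (lam - lam * z) * (alpha * (1 - d2) / h2 * p)
      = nu / lam * ((lam * (1 - d1) + alpha * (1 - d2)) / (nu * (d1 - z)) * p) := by
  have hz_sub : 1 - z ≠ 0 := sub_ne_zero.2 hz.symm
  have hd1_sub : d1 - z ≠ 0 := sub_ne_zero.2 hd1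
  have hw : lam - lam * z = lam * (1 - z) := by ring
  have hrepair1 : beta1 * (1 - r1) = h1 - lam * (1 - z) := by rw [hh1]; ring
  have hrepair2 : beta2 * (1 - r2) = h2 - lam * (1 - z) := by rw [hh2]; ring
  rw [hw, hrepair1, hrepair2]
  field_simp
  ring

end BusyProbability

theorem orbit_entry_probability_general
    {lam alpha nu beta1 beta2 : ℝ}
    (hlam : 0 < lam) (halpha : 0 ≤ alpha) (hnu : nu ≠ 0)
    (hbeta1 : 0 ≤ beta1) (hbeta2 : 0 ≤ beta2)
    {S1 R1 S2 R2 : Measure ℝ}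
    [IsProbabilityMeasure S1] [IsProbabilityMeasure R1]
    [IsProbabilityMeasure S2] [IsProbabilityMeasure R2]
    (hS1 : S1 (Set.Iio 0) = 0) (hR1 : R1 (Set.Iio 0) = 0)
    (hS2 : S2 (Set.Iio 0) = 0) (hR2 : R2 (Set.Iio 0) = 0)
    (hiS1 : Integrable (fun x => x) S1) (hiR1 : Integrable (fun x => x) R1)
    (hiS2 : Integrable (fun x => x) S2) (hiR2 : Integrable (fun x => x) R2)
    {mu11 gamma11 mu21 gamma21 : ℝ}
    (hmu11 : mu11 = ∫ x, x ∂S1) (hgamma11 : gamma11 = ∫ x, x ∂ R1)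
    (hmu21 : mu21 = ∫ x, x ∂S2) (hgamma21 : gamma21 = ∫ x, x ∂ R2)
    {rho sigma : ℝ} (hrho : rho = lam * mu11) (hsigma : sigma = alpha * mu21)
    {h1 h2 δ1 δ2 g φ : ℝ → ℝ}
    (hh1 : ∀ z, h1 z = lam + beta1 - lam * z - beta1 * lapl R1 (lam - lam * z))
    (hh2 : ∀ z, h2 z = lam + beta2 - lam * z - beta2 * lapl R2 (lam - lam * z))
    (hδ1 : ∀ z, δ1 z = lapl S1 (h1 z)) (hδ2 : ∀ z, δ2 z = lapl S2 (h2 z))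
    (hg : ∀ u, g u = (lam * (1 - δ1 u) + alpha * (1 - δ2 u)) / (nu * (δ1 u - u)))
    (hφ : ∀ z, φ z = Real.exp (-(∫ u in z..1, g u)))
    {P0 : ℝ → ℝ}
    (hP0 : ∀ z, P0 z = ((1 - rho * (1 + beta1 * gamma11)) /
      (1 + sigma * (1 + beta2 * gamma21))) * φ z)
    {P1 P2 : ℝ → ℝ}
    (hP1 : ∀ z, P1 z = (lam * (1 - z) + alpha * (1 - δ2 z)) * (1 - δ1 z) /
      ((δ1 z - z) * h1 z) * P0 z)
    (hP2 : ∀ z, P2 z = alpha * (1 - δ2 z) / h2 z * P0 z)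
    {P3 P4 : ℝ → ℝ}
    (hP3 : ∀ z, P3 z = beta1 * (1 - lapl R1 (lam - lam * z)) / (lam - lam * z) * P1 z)
    (hP4 : ∀ z, P4 z = beta2 * (1 - lapl R2 (lam - lam * z)) / (lam - lam * z) * P2 z)
    (hstab : rho * (1 + beta1 * gamma11) ≠ 1) :
    Filter.Tendsto (fun z : ℝ => P1 z + P2 z + P3 z + P4 z) (nhdsWithin 1 (Set.Iio 1))
      (nhds ((rho * (1 + beta1 * gamma11) + sigma * (1 + beta2 * gamma21)) /
        (1 + sigma * (1 + beta2 * gamma21)))) := by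
  rw [← ae_nonneg_iff_measure_Iio_eq_zero] at hS1 hR1 hS2 hR2
  obtain rfl : h1 = completionExponent lam beta1 R1 := funext hh1
  obtain rfl : h2 = completionExponent lam beta2 R2 := funext hh2
  obtain rfl : δ1 = completionPGF lam beta1 S1 R1 := funext hδ1
  obtain rfl : δ2 = completionPGF lam beta2 S2 R2 := funext hδ2
  have hload1 : rho * (1 + beta1 * gamma11) = lam * meanCompletionTime beta1 S1 R1 := by
    rw [hrho, hmu11, hgamma11, meanCompletionTime, mul_assoc]
  have hload2 : sigma * (1 + beta2 * gamma21) = alpha * meanCompletionTime beta2 S2 R2 := by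
    rw [hsigma, hmu21, hgamma21, meanCompletionTime, mul_assoc]
  simp only [hload1, hload2] at hP0 hstab ⊢
  have hderiv1 := hasDerivWithinAt_completionPGF hlam hbeta1 hS1 hR1 hiS1 hiR1
  have hderiv2 := hasDerivWithinAt_completionPGF hlam hbeta2 hS2 hR2 hiS2 hiR2
  have hlim := tendsto_idleLogDeriv_mul_exp lam alpha
    ((1 - lam * meanCompletionTime beta1 S1 R1) / (1 + alpha * meanCompletionTime beta2 S2 R2))
    hnu hderiv1 hderiv2 completionPGF_one completionPGF_one hstab
  rw [← show g = idleLogDeriv lam alpha nu _ _ from funext hg] at hlim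
  simp only [← hφ, ← hP0] at hlim
  have hδ1_ne : ∀ᶠ z in 𝓝[<] 1, completionPGF lam beta1 S1 R1 z ≠ z := by
    simpa using eventually_ne_self_of_hasDerivWithinAt hderiv1 hstab
  have hsum : ∀ᶠ z in 𝓝[<] 1, nu / lam * (g z * P0 z) = P1 z + P2 z + P3 z + P4 z := by
    filter_upwards [self_mem_nhdsWithin, hδ1_ne] with z hz hδ1z
    rw [hP3, hP4, hP1, hP2, hg]
    exact (busy_sum_eq hlam.ne' hnu (ne_of_lt hz) hδ1z
      (completionExponent_pos hlam hbeta1 hR1 hz).ne'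
      (completionExponent_pos hlam hbeta2 hR2 hz).ne' (hh1 z) (hh2 z)).symm
  have hm2 := meanCompletionTime_nonneg hbeta2 hS2 hR2
  have hD : 1 + alpha * meanCompletionTime beta2 S2 R2 ≠ 0 := by positivity
  have hstab_sub := sub_ne_zero.2 hstab.symm
  convert (hlim.const_mul (nu / lam)).congr' hsum using 2
  rw [div_eq_iff hD]
  field_simp

/-- probability that an arriving inbound call enters the orbit
`P_w = lim_{z→1⁻} (P̃₁(z) + P̃₂(z) + P̃₃(z) + P̃₄(z))
     = [ρ(1 + β₁γ_{1,1}) + σ(1 + β₂γ_{2,1})] / (1 + σ(1 + β₂γ_{2,1}))`. -/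
theorem orbit_entry_probability
    (lam alpha nu beta1 beta2 : ℝ)
    (hlam : 0 < lam) (halpha : 0 < alpha) (hnu : 0 < nu)
    (hbeta1 : 0 ≤ beta1) (hbeta2 : 0 ≤ beta2)
    (S1 R1 S2 R2 : Measure ℝ)
    [IsProbabilityMeasure S1] [IsProbabilityMeasure R1]
    [IsProbabilityMeasure S2] [IsProbabilityMeasure R2]
    (hS1 : S1 (Set.Iio 0) = 0) (hR1 : R1 (Set.Iio 0) = 0)
    (hS2 : S2 (Set.Iio 0) = 0) (hR2 : R2 (Set.Iio 0) = 0)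
    (hiS1 : Integrable (fun x => x) S1) (hiR1 : Integrable (fun x => x) R1)
    (hiS2 : Integrable (fun x => x) S2) (hiR2 : Integrable (fun x => x) R2)
    (mu11 gamma11 mu21 gamma21 : ℝ)
    (hmu11 : mu11 = ∫ x, x ∂S1) (hgamma11 : gamma11 = ∫ x, x ∂ R1)
    (hmu21 : mu21 = ∫ x, x ∂S2) (hgamma21 : gamma21 = ∫ x, x ∂ R2)
    (rho sigma : ℝ) (hrho : rho = lam * mu11) (hsigma : sigma = alpha * mu21)
    (h1 h2 δ1 δ2 g φ : ℝ → ℝ)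
    (hh1 : ∀ z, h1 z = lam + beta1 - lam * z - beta1 * lapl R1 (lam - lam * z))
    (hh2 : ∀ z, h2 z = lam + beta2 - lam * z - beta2 * lapl R2 (lam - lam * z))
    (hδ1 : ∀ z, δ1 z = lapl S1 (h1 z)) (hδ2 : ∀ z, δ2 z = lapl S2 (h2 z))
    (hg : ∀ u, g u = (lam * (1 - δ1 u) + alpha * (1 - δ2 u)) / (nu * (δ1 u - u)))
    (hφ : ∀ z, φ z = Real.exp (-(∫ u in z..1, g u)))
    (P0 : ℝ → ℝ)
    (hP0 : ∀ z, P0 z = ((1 - rho * (1 + beta1 * gamma11)) /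
      (1 + sigma * (1 + beta2 * gamma21))) * φ z)
    (P1 P2 : ℝ → ℝ)
    (hP1 : ∀ z, P1 z = (lam * (1 - z) + alpha * (1 - δ2 z)) * (1 - δ1 z) /
      ((δ1 z - z) * h1 z) * P0 z)
    (hP2 : ∀ z, P2 z = alpha * (1 - δ2 z) / h2 z * P0 z)
    (P3 P4 : ℝ → ℝ)
    (hP3 : ∀ z, P3 z = beta1 * (1 - lapl R1 (lam - lam * z)) / (lam - lam * z) * P1 z)
    (hP4 : ∀ z, P4 z = beta2 * (1 - lapl R2 (lam - lam * z)) / (lam - lam * z) * P2 z)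
    (hstab : rho * (1 + beta1 * gamma11) < 1) :
    Filter.Tendsto (fun z : ℝ => P1 z + P2 z + P3 z + P4 z) (nhdsWithin 1 (Set.Iio 1))
      (nhds ((rho * (1 + beta1 * gamma11) + sigma * (1 + beta2 * gamma21)) /
        (1 + sigma * (1 + beta2 * gamma21)))) :=
  orbit_entry_probability_general hlam halpha.le hnu.ne' hbeta1 hbeta2 hS1 hR1 hS2 hR2
    hiS1 hiR1 hiS2 hiR2 hmu11 hgamma11 hmu21 hgamma21 hrho hsigma hh1 hh2 hδ1 hδ2 hg hφ
    hP0 hP1 hP2 hP3 hP4 hstab.ne
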